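/- Fractional inverse inequality for piecewise polynomials in 1D: let 0 < s < 1 and 1 ≤ p < ∞ with sp < 1, let 0 = x₀ < x₁ < ... < x_N = 1 be the uniform mesh with mesh size h = 1/N, and let v be a continuous piecewise polynomial of degree at most m on this mesh. Then the Gagliardo seminorm satisfies [v]_{W^{s,p}(0,1)} ≤ C h^{-s} ‖v‖_{L^p(0,1)}, with C independent of h and v. -/

import Mathlib

open MeasureTheory Set

lemma aux_coef (p : ℝ) (hp : 1 ≤ p) (m : ℕ) :
    ∃ δ > 0, ∀ c : Fin (m+1) → ℝ,
      δ * ‖c‖ ^ p ≤ ∫ t in (0:ℝ)..1, |∑ i, c i * t ^ (i:ℕ)| ^ p := by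
  have hp0 : 0 < p := by linarith
  set G : (Fin (m+1) → ℝ) → ℝ := fun c => ∫ t in (0:ℝ)..1, |∑ i, c i * t ^ (i:ℕ)| ^ p with hG
  have hcont : Continuous G := by
    apply intervalIntegral.continuous_parametric_intervalIntegral_of_continuous'
    apply Continuous.rpow_const
    · fun_prop
    · intro x; right; exact hp0.le
  have hpos : ∀ c : Fin (m+1) → ℝ, c ≠ 0 → 0 < G c := by
    intro c hc
    apply intervalIntegral.integral_pos one_pos
    · apply Continuous.continuousOn
      apply Continuous.rpow_const
      · fun_prop
      · intro x; right; exact hp0.le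
    · intro x _; positivity
    · by_contra hcon
      push Not at hcon
      apply hc
      set P : Polynomial ℝ := ∑ i : Fin (m+1), Polynomial.monomial (i:ℕ) (c i) with hP
      have hev : ∀ t, P.eval t = ∑ i, c i * t ^ (i:ℕ) := by
        intro t
        simp [hP, Polynomial.eval_finsetSum, Polynomial.eval_monomial]
      have hP0 : P = 0 := by
        apply Polynomial.eq_zero_of_infinite_isRoot
        apply Set.Infinite.mono _ (Set.Icc_infinite (zero_lt_one' ℝ))
        intro t ht
        have h1 := hcon t ht
        simp only [mem_ofPred_eq, Polynomial.IsRoot.def, hev]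
        by_contra hne
        have : 0 < |∑ i, c i * t ^ (i:ℕ)| ^ p := by positivity
        linarith
      funext j
      have h2 := congrArg (fun q => Polynomial.coeff q (j:ℕ)) hP0
      simp only [hP, Polynomial.finsetSum_coeff, Polynomial.coeff_monomial, Polynomial.coeff_zero] at h2
      rw [Finset.sum_eq_single j] at h2
      · simpa using h2
      · intro b _ hb
        rw [if_neg]
        intro h; exact hb (Fin.ext h)
      · simp
  have hcomp : IsCompact (Metric.sphere (0 : Fin (m+1) → ℝ) 1) := isCompact_sphere _ _
  have hne : (Metric.sphere (0 : Fin (m+1) → ℝ) 1).Nonempty := NormedSpace.sphere_nonempty.2 zero_le_one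
  obtain ⟨c0, hc0, hmin⟩ := hcomp.exists_isMinOn hne hcont.continuousOn
  refine ⟨G c0, hpos c0 ?_, ?_⟩
  · intro h; rw [h] at hc0; simp at hc0
  intro c
  by_cases hc : c = 0
  · subst hc
    rw [norm_zero, Real.zero_rpow hp0.ne', mul_zero]
    apply intervalIntegral.integral_nonneg zero_le_one
    intro t _; positivity
  have hn : 0 < ‖c‖ := norm_pos_iff.2 hc
  have h3 : G c0 ≤ G (‖c‖⁻¹ • c) := by
    apply hmin
    simp [norm_smul, hn.ne']
  have h4 : G c = ‖c‖ ^ p * G (‖c‖⁻¹ • c) := by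
    simp only [hG]
    rw [← intervalIntegral.integral_const_mul]
    congr 1
    funext t
    rw [← abs_of_pos hn, ← Real.mul_rpow (abs_nonneg _) (abs_nonneg _), ← abs_mul, Finset.mul_sum, abs_of_pos hn]
    congr 2
    apply Finset.sum_congr rfl
    intro i _
    simp only [Pi.smul_apply, smul_eq_mul]
    field_simp
  calc G c0 * ‖c‖ ^ p ≤ G (‖c‖⁻¹ • c) * ‖c‖ ^ p := by gcongr
    _ = G c := by rw [h4]; ring

lemma aux_ref (p : ℝ) (hp : 1 ≤ p) (m : ℕ) :
    ∃ C > 0, ∀ Q : Polynomial ℝ, Q.natDegree ≤ m → ∀ x ∈ Icc (0:ℝ) 1, ∀ y ∈ Icc (0:ℝ) 1,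
      |Q.eval x - Q.eval y| ^ p ≤ C * |x - y| ^ p * ∫ t in (0:ℝ)..1, |Q.eval t| ^ p := by
  obtain ⟨δ, hδ, hc⟩ := aux_coef p hp m
  have hp0 : 0 < p := by linarith
  refine ⟨((m+1 : ℝ) * (m+1)) ^ p * δ⁻¹, by positivity, ?_⟩
  intro Q hQ x hx y hy
  set c : Fin (m+1) → ℝ := fun i => Q.coeff i with hcdef
  have hev : ∀ t, Q.eval t = ∑ i, c i * t ^ (i:ℕ) := by
    intro t
    rw [Polynomial.eval_eq_sum_range' (Nat.lt_succ_of_le hQ), Finset.sum_range]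
  have h1 := hc c
  simp only [← hev] at h1
  have h2 : |Q.eval x - Q.eval y| ≤ ((m+1 : ℝ) * (m+1)) * |x - y| * ‖c‖ := by
    rw [hev, hev, ← Finset.sum_sub_distrib]
    refine (Finset.abs_sum_le_sum_abs _ _).trans ?_
    have : ∀ i ∈ (Finset.univ : Finset (Fin (m+1))), |c i * x ^ (i:ℕ) - c i * y ^ (i:ℕ)| ≤ (m+1:ℝ) * |x - y| * ‖c‖ := by
      intro i _
      rw [← mul_sub, abs_mul]
      have h3 := abs_pow_sub_pow_le x y (i:ℕ)
      have h4 : max |x| |y| ^ ((i:ℕ) - 1) ≤ 1 := by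
        apply pow_le_one₀ (by positivity)
        rw [abs_of_nonneg hx.1, abs_of_nonneg hy.1]
        exact max_le hx.2 hy.2
      have h5 : ((i:ℕ):ℝ) ≤ m + 1 := by exact_mod_cast i.2.le
      have h6 : |c i| ≤ ‖c‖ := norm_le_pi_norm c i
      calc |c i| * |x ^ (i:ℕ) - y ^ (i:ℕ)| ≤ ‖c‖ * (|x - y| * (m+1) * 1) := by
            gcongr
            refine h3.trans ?_
            gcongr
        _ = _ := by ring
    refine (Finset.sum_le_sum this).trans ?_
    simp
    apply le_of_eq; ring
  calc |Q.eval x - Q.eval y| ^ p ≤ (((m+1 : ℝ) * (m+1)) * |x - y| * ‖c‖) ^ p := by gcongr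
    _ = ((m+1 : ℝ) * (m+1)) ^ p * δ⁻¹ * |x - y| ^ p * (δ * ‖c‖ ^ p) := by
      rw [Real.mul_rpow (by positivity) (by positivity), Real.mul_rpow (by positivity) (by positivity)]
      field_simp
    _ ≤ _ := by gcongr

/-- scaled version -/
lemma aux_loc (p : ℝ) (hp : 1 ≤ p) (m : ℕ) :
    ∃ C > 0, ∀ Q : Polynomial ℝ, Q.natDegree ≤ m → ∀ a h : ℝ, 0 < h →
      ∀ x ∈ Icc a (a + h), ∀ y ∈ Icc a (a + h),
      |Q.eval x - Q.eval y| ^ p ≤ C * h ^ (-p - 1) * |x - y| ^ p * ∫ t in a..(a+h), |Q.eval t| ^ p := by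
  obtain ⟨C, hC, H⟩ := aux_ref p hp m
  refine ⟨C, hC, ?_⟩
  intro Q hQ a h hh x hx y hy
  set R := Q.comp (Polynomial.C a + Polynomial.C h * Polynomial.X) with hR
  have hev : ∀ t, R.eval t = Q.eval (a + h * t) := by intro t; simp [hR]
  have hRd : R.natDegree ≤ m := by
    refine Polynomial.natDegree_comp_le.trans ?_
    have : (Polynomial.C a + Polynomial.C h * Polynomial.X : Polynomial ℝ).natDegree ≤ 1 := by
      compute_degree
    calc _ ≤ m * 1 := Nat.mul_le_mul hQ this
      _ = m := by simp
  have hm : ∀ z ∈ Icc a (a+h), (z - a) / h ∈ Icc (0:ℝ) 1 := by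
    intro z hz
    refine ⟨div_nonneg (by linarith [hz.1]) hh.le, ?_⟩
    rw [div_le_one hh]; linarith [hz.2]
  have h1 := H R hRd _ (hm x hx) _ (hm y hy)
  simp only [hev] at h1
  rw [intervalIntegral.integral_comp_add_mul (fun z => |Q.eval z| ^ p) hh.ne'] at h1
  have e1 : ∀ z, a + h * ((z - a) / h) = z := by intro z; field_simp; ring
  rw [e1, e1] at h1
  simp only [mul_zero, add_zero, mul_one, smul_eq_mul] at h1
  refine h1.trans (le_of_eq ?_)
  have e2 : (x - a) / h - (y - a) / h = (x - y) / h := by ring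
  rw [e2, abs_div, abs_of_pos hh, Real.div_rpow (abs_nonneg _) hh.le, Real.rpow_sub hh, Real.rpow_neg hh.le, Real.rpow_one]
  ring

lemma aux_near (p : ℝ) (hp : 1 ≤ p) (m : ℕ) :
    ∃ C > 0, ∀ (N : ℕ) (h : ℝ) (v : ℝ → ℝ), 0 < N → h = 1 / (N : ℝ) →
      Continuous v →
      (∀ k : ℕ, k < N → ∃ P : Polynomial ℝ, P.natDegree ≤ m ∧
        ∀ x ∈ Icc ((k : ℝ) * h) (((k : ℝ) + 1) * h), v x = P.eval x) →
      ∀ x ∈ Ioo (0:ℝ) 1, ∀ y ∈ Ioo (0:ℝ) 1, |x - y| < h →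
      |v x - v y| ^ p ≤ C * h ^ (-p - 1) * |x - y| ^ p *
        ∫ t in Ioo (0:ℝ) 1 ∩ Icc (x - 2 * h) (x + 2 * h), |v t| ^ p := by
  obtain ⟨C, hC, H⟩ := aux_loc p hp m
  have hp0 : 0 < p := by linarith
  refine ⟨2 ^ (p - 1) * (C + C), by positivity, ?_⟩
  intro N h v hN hh hv hpoly
  have hNp : (0:ℝ) < N := by exact_mod_cast hN
  have hpos : 0 < h := by rw [hh]; positivity
  have hNh : N * h = 1 := by rw [hh]; field_simp
  have hvc : Continuous fun t => |v t| ^ p :=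
    Continuous.rpow_const (by fun_prop) (fun _ => Or.inr hp0.le)
  -- local estimate
  have key : ∀ k : ℕ, k < N → ∀ x ∈ Icc ((k : ℝ) * h) (((k : ℝ) + 1) * h),
      ∀ y ∈ Icc ((k : ℝ) * h) (((k : ℝ) + 1) * h), ∀ z : ℝ, z - 2 * h ≤ k * h → (k + 1) * h ≤ z + 2 * h →
      |v x - v y| ^ p ≤ C * h ^ (-p - 1) * |x - y| ^ p *
        ∫ t in Ioo (0:ℝ) 1 ∩ Icc (z - 2 * h) (z + 2 * h), |v t| ^ p := by
    intro k hk x hx y hy z hz1 hz2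
    obtain ⟨P, hP, hPe⟩ := hpoly k hk
    have e : ((k:ℝ) + 1) * h = k * h + h := by ring
    have h1 := H P hP (k * h) h hpos x (by rw [← e]; exact hx) y (by rw [← e]; exact hy)
    rw [hPe x hx, hPe y hy]
    refine h1.trans ?_
    gcongr
    have hk1 : ((k:ℝ) + 1) * h ≤ 1 := by
      have h3 : (k:ℝ) + 1 ≤ N := by exact_mod_cast hk
      have h4 := mul_le_mul_of_nonneg_right h3 hpos.le
      linarith
    rw [← e, intervalIntegral.integral_of_le (by nlinarith), integral_Ioc_eq_integral_Ioo]
    rw [setIntegral_congr_fun (g := fun t => |v t| ^ p) measurableSet_Ioo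
      (fun t ht => by simp only [hPe t (Ioo_subset_Icc_self ht)])]
    apply setIntegral_mono_set
    · exact (hvc.integrableOn_Icc (a := z - 2*h) (b := z + 2*h)).mono_set inter_subset_right
    · exact Filter.Eventually.of_forall (fun t => by positivity)
    · apply Filter.Eventually.of_forall
      intro t ht
      have : 0 ≤ (k:ℝ) * h := by positivity
      exact ⟨⟨by linarith [ht.1], by linarith [ht.2]⟩, by linarith [ht.1], by linarith [ht.2]⟩
  -- ordered case
  have ord : ∀ x ∈ Ioo (0:ℝ) 1, ∀ y ∈ Ioo (0:ℝ) 1, x ≤ y → y - x < h → ∀ z, (z = x ∨ z = y) → 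
      |v x - v y| ^ p ≤ 2 ^ (p - 1) * (C + C) * h ^ (-p - 1) * |x - y| ^ p *
        ∫ t in Ioo (0:ℝ) 1 ∩ Icc (z - 2 * h) (z + 2 * h), |v t| ^ p := by
    intro x hx y hy hxy hd z hz
    set k := ⌊x / h⌋₊ with hk
    have hx0 : 0 ≤ x / h := div_nonneg hx.1.le hpos.le
    have k1 : (k:ℝ) * h ≤ x := by
      rw [← le_div_iff₀ hpos]; exact Nat.floor_le hx0
    have k2 : x < ((k:ℝ) + 1) * h := by
      rw [← div_lt_iff₀ hpos]; exact Nat.lt_floor_add_one _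
    have kN : k < N := by
      have : (k:ℝ) < N := by
        by_contra hcon
        push Not at hcon
        have : (N:ℝ) * h ≤ k * h := by gcongr
        linarith [hx.2]
      exact_mod_cast this
    have hT : 0 ≤ ∫ t in Ioo (0:ℝ) 1 ∩ Icc (z - 2 * h) (z + 2 * h), |v t| ^ p :=
      integral_nonneg (fun t => by positivity)
    set T := ∫ t in Ioo (0:ℝ) 1 ∩ Icc (z - 2 * h) (z + 2 * h), |v t| ^ p with hTd
    have h2p : (1:ℝ) ≤ 2 ^ (p-1) := Real.one_le_rpow (by norm_num) (by linarith)
    by_cases hyk : y ≤ ((k:ℝ) + 1) * h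
    · have h1 := key k kN x ⟨k1, k2.le⟩ y ⟨k1.trans hxy, hyk⟩ z
        (by rcases hz with rfl | rfl <;> linarith) (by rcases hz with rfl | rfl <;> linarith)
      refine h1.trans ?_
      gcongr
      nlinarith
    · push Not at hyk
      have kN2 : k + 1 < N := by
        have : ((k + 1 : ℕ):ℝ) < N := by
          by_contra hcon
          push Not at hcon
          have : (N:ℝ) * h ≤ ((k+1:ℕ):ℝ) * h := by gcongr
          push_cast at this
          linarith [hy.2]
        exact_mod_cast this
      set w := ((k:ℝ) + 1) * h with hw
      have h1 := key k kN x ⟨k1, k2.le⟩ w ⟨by nlinarith, le_refl _⟩ z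
        (by rcases hz with rfl | rfl <;> nlinarith) (by rcases hz with rfl | rfl <;> nlinarith)
      have h2 := key (k+1) kN2 w ⟨by push_cast; exact le_refl _, by push_cast; nlinarith⟩ y
        ⟨by push_cast; linarith, by push_cast; nlinarith⟩ z
        (by push_cast; rcases hz with rfl | rfl <;> nlinarith) (by push_cast; rcases hz with rfl | rfl <;> nlinarith)
      have a1 : |x - w| ^ p ≤ |x - y| ^ p := by
        apply Real.rpow_le_rpow (abs_nonneg _) _ hp0.le
        rw [abs_of_nonpos (by linarith), abs_of_nonpos (by linarith)]; linarith
      have a2 : |w - y| ^ p ≤ |x - y| ^ p := by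
        apply Real.rpow_le_rpow (abs_nonneg _) _ hp0.le
        rw [abs_of_nonpos (by linarith), abs_of_nonpos (by linarith)]; linarith
      have h3 : |v x - v y| ^ p ≤ 2 ^ (p-1) * (|v x - v w| ^ p + |v w - v y| ^ p) := by
        refine (Real.rpow_le_rpow (abs_nonneg _) (abs_sub_le _ (v w) _) hp0.le).trans ?_
        have := NNReal.rpow_add_le_mul_rpow_add_rpow ⟨|v x - v w|, abs_nonneg _⟩ ⟨|v w - v y|, abs_nonneg _⟩ hp
        exact_mod_cast this
      calc |v x - v y| ^ p ≤ 2 ^ (p-1) * (|v x - v w| ^ p + |v w - v y| ^ p) := h3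
        _ ≤ 2 ^ (p-1) * (C * h ^ (-p - 1) * |x - w| ^ p * T + C * h ^ (-p - 1) * |w - y| ^ p * T) := by gcongr
        _ ≤ 2 ^ (p-1) * (C * h ^ (-p - 1) * |x - y| ^ p * T + C * h ^ (-p - 1) * |x - y| ^ p * T) := by gcongr
        _ = _ := by ring
  intro x hx y hy hd
  rcases le_total x y with hxy | hxy
  · exact ord x hx y hy hxy (by rw [abs_of_nonpos (by linarith)] at hd; linarith) x (Or.inl rfl)
  · rw [abs_sub_comm (v x), abs_sub_comm x]
    exact ord y hy x hx hxy (by rw [abs_of_nonneg (by linarith)] at hd; linarith) x (Or.inr rfl)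

lemma aux_abs (g : ℝ → ENNReal) :
    ∫⁻ r : ℝ, g |r| ≤ 2 * ∫⁻ r in Ioi (0:ℝ), g r := by
  have h1 : ∫⁻ r in Ioi (0:ℝ), g |r| = ∫⁻ r in Ioi (0:ℝ), g r :=
    setLIntegral_congr_fun measurableSet_Ioi (fun r hr => by rw [abs_of_pos hr])
  have h2 : ∫⁻ r in Iio (0:ℝ), g |r| = ∫⁻ r in Ioi (0:ℝ), g |r| := by
    have := (Measure.measurePreserving_neg (volume : Measure ℝ)).setLIntegral_comp_preimage_emb
      (MeasurableEquiv.neg ℝ).measurableEmbedding (fun r => g |r|) (Ioi 0)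
    rw [← this]
    simp
  rw [← lintegral_add_compl _ (measurableSet_Ioi (a := (0:ℝ))), compl_Ioi,
    setLIntegral_congr (Iio_ae_eq_Iic (a := (0:ℝ))).symm, h2, h1, two_mul]

lemma aux_k1 (a h : ℝ) (ha : -1 < a) (hh : 0 < h) :
    ∫⁻ r : ℝ, (Iio h).indicator (fun t => ENNReal.ofReal (t ^ a)) |r| ≤
      2 * ENNReal.ofReal (h ^ (a + 1) / (a + 1)) := by
  refine (aux_abs _).trans ?_
  gcongr
  rw [setLIntegral_indicator measurableSet_Iio]
  have hset : Iio h ∩ Ioi 0 = Ioo 0 h := by ext; simp [and_comm]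
  rw [hset, ← ofReal_integral_eq_lintegral_ofReal]
  · rw [← integral_Ioc_eq_integral_Ioo, ← intervalIntegral.integral_of_le hh.le,
      integral_rpow (Or.inl ha), Real.zero_rpow (by linarith), sub_zero]
  · have := (intervalIntegral.intervalIntegrable_rpow' (a := 0) (b := h) ha)
    rw [intervalIntegrable_iff_integrableOn_Ioo_of_le hh.le] at this
    exact this
  · filter_upwards [ae_restrict_mem measurableSet_Ioo] with t ht
    exact Real.rpow_nonneg ht.1.le _

lemma aux_k2 (σ h : ℝ) (hσ : 0 < σ) (hh : 0 < h) :
    ∫⁻ r : ℝ, (Ici h).indicator (fun t => ENNReal.ofReal (t ^ (-1 - σ))) |r| ≤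
      2 * ENNReal.ofReal (h ^ (-σ) / σ) := by
  refine (aux_abs _).trans ?_
  gcongr
  rw [setLIntegral_indicator measurableSet_Ici]
  have hset : Ici h ∩ Ioi 0 = Ici h := by
    ext x; simp only [mem_inter_iff, mem_Ici, mem_Ioi, and_iff_left_iff_imp]; intro; linarith
  rw [hset, setLIntegral_congr (Ioi_ae_eq_Ici (a := h)).symm, ← ofReal_integral_eq_lintegral_ofReal]
  · rw [integral_Ioi_rpow_of_lt (by linarith) hh]
    apply le_of_eq
    congr 1
    rw [show -1 - σ + 1 = -σ by ring, neg_div_neg_eq]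
  · exact integrableOn_Ioi_rpow_of_lt (by linarith) hh
  · filter_upwards [ae_restrict_mem measurableSet_Ioi] with t ht
    exact Real.rpow_nonneg (hh.le.trans ht.le) _

lemma aux_window (w : ℝ → ENNReal) (hw : Measurable w) (h : ℝ) :
    ∫⁻ x in Ioo (0:ℝ) 1, ∫⁻ t in Ioo (0:ℝ) 1 ∩ Icc (x - 2 * h) (x + 2 * h), w t
      ≤ ENNReal.ofReal (4 * h) * ∫⁻ t in Ioo (0:ℝ) 1, w t := by
  have h1 : ∀ x, ∫⁻ t in Ioo (0:ℝ) 1 ∩ Icc (x - 2 * h) (x + 2 * h), w t =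
      ∫⁻ t in Ioo (0:ℝ) 1, {z : ℝ × ℝ | |z.1 - z.2| ≤ 2 * h}.indicator (fun z => w z.2) (x, t) := by
    intro x
    rw [inter_comm, ← setLIntegral_indicator measurableSet_Icc]
    congr 1
    funext t
    simp only [indicator, mem_Icc, mem_ofPred_eq, abs_le]
    congr 1
    apply propext
    constructor <;> rintro ⟨h1, h2⟩ <;> constructor <;> linarith
  simp_rw [h1]
  have hms : MeasurableSet {z : ℝ × ℝ | |z.1 - z.2| ≤ 2 * h} :=
    measurableSet_le (by fun_prop) (by fun_prop)
  rw [lintegral_lintegral_swap]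
  · rw [← lintegral_const_mul _ hw]
    apply lintegral_mono
    intro t
    calc ∫⁻ x in Ioo (0:ℝ) 1, {z : ℝ × ℝ | |z.1 - z.2| ≤ 2 * h}.indicator (fun z => w z.2) (x, t)
        ≤ ∫⁻ x, {z : ℝ × ℝ | |z.1 - z.2| ≤ 2 * h}.indicator (fun z => w z.2) (x, t) :=
          setLIntegral_le_lintegral _ _
      _ = ∫⁻ x, (Icc (t - 2 * h) (t + 2 * h)).indicator (fun _ => w t) x := by
        congr 1
        funext x
        simp only [indicator, mem_Icc, mem_ofPred_eq, abs_le]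
        congr 1
        apply propext
        constructor <;> rintro ⟨h1, h2⟩ <;> constructor <;> linarith
      _ = ENNReal.ofReal (4 * h) * w t := by
        rw [lintegral_indicator_const measurableSet_Icc, Real.volume_Icc, mul_comm]
        congr 2; ring
  · exact ((hw.comp measurable_snd).indicator hms).aemeasurable

/-- Convolution-type bound, kernel times a function of the outer variable. -/
lemma aux_conv (K w : ℝ → ENNReal) (hK : Measurable K) (c : ENNReal) (hc : c ≠ ⊤)
    (hKc : ∫⁻ r : ℝ, K |r| ≤ c) :
    ∫⁻ x in Ioo (0:ℝ) 1, ∫⁻ y in Ioo (0:ℝ) 1, K |x - y| * w x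
      ≤ c * ∫⁻ x in Ioo (0:ℝ) 1, w x := by
  rw [← lintegral_const_mul' _ _ hc]
  apply lintegral_mono
  intro x
  simp only
  rw [lintegral_mul_const _ (by fun_prop)]
  gcongr
  refine (setLIntegral_le_lintegral _ _).trans ?_
  rw [lintegral_sub_left_eq_self (fun r => K |r|) x]
  exact hKc

/-- Convolution-type bound, kernel times a function of the inner variable. -/
lemma aux_conv2 (K w : ℝ → ENNReal) (hK : Measurable K) (hw : Measurable w) (c : ENNReal)
    (hc : c ≠ ⊤) (hKc : ∫⁻ r : ℝ, K |r| ≤ c) :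
    ∫⁻ x in Ioo (0:ℝ) 1, ∫⁻ y in Ioo (0:ℝ) 1, K |x - y| * w y
      ≤ c * ∫⁻ x in Ioo (0:ℝ) 1, w x := by
  rw [lintegral_lintegral_swap]
  · refine le_trans (le_of_eq ?_) (aux_conv K w hK c hc hKc)
    congr 1
    funext y
    congr 1
    funext x
    rw [abs_sub_comm]
  · apply Measurable.aemeasurable
    unfold Function.uncurry
    fun_prop

lemma aux_main (s p : ℝ) (m : ℕ) (hs : 0 < s) (hs1 : s < 1) (hp : 1 ≤ p) :
    ∃ D > 0, ∀ (N : ℕ) (h : ℝ) (v : ℝ → ℝ), 0 < N → h = 1 / (N : ℝ) →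
      Continuous v →
      (∀ k : ℕ, k < N → ∃ P : Polynomial ℝ, P.natDegree ≤ m ∧
        ∀ x ∈ Icc ((k : ℝ) * h) (((k : ℝ) + 1) * h), v x = P.eval x) →
      (∫ x in Ioo (0:ℝ) 1, ∫ y in Ioo (0:ℝ) 1,
          |v x - v y| ^ p / |x - y| ^ (1 + s * p))
        ≤ D * h ^ (-(s * p)) * (∫ x in Ioo (0:ℝ) 1, |v x| ^ p) := by
  obtain ⟨C, hC, H⟩ := aux_near p hp m
  have hp0 : 0 < p := by linarith
  set σ := s * p with hσd
  have hσ : 0 < σ := by positivity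
  have hσp : 0 < p - σ := by
    have : p - σ = p * (1 - s) := by rw [hσd]; ring
    rw [this]; exact mul_pos hp0 (by linarith)
  refine ⟨8 * C / (p - σ) + 4 * 2 ^ (p - 1) / σ, by positivity, ?_⟩
  intro N h v hN hh hv hpoly
  have hN0 : (0:ℝ) < N := by exact_mod_cast hN
  have hpos : 0 < h := by rw [hh]; positivity
  have hvc : Continuous fun t => |v t| ^ p :=
    Continuous.rpow_const (by fun_prop) (fun _ => Or.inr hp0.le)
  have near := H N h v hN hh hv hpoly
  set w : ℝ → ENNReal := fun t => ENNReal.ofReal (|v t| ^ p) with hwd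
  have hw : Measurable w := hvc.measurable.ennreal_ofReal
  set K1 : ℝ → ENNReal := (Iio h).indicator (fun t => ENNReal.ofReal (t ^ (p - σ - 1))) with hK1
  set K2 : ℝ → ENNReal := (Ici h).indicator (fun t => ENNReal.ofReal (t ^ (-1 - σ))) with hK2
  have mK1 : Measurable K1 := Measurable.indicator (by fun_prop) measurableSet_Iio
  have mK2 : Measurable K2 := Measurable.indicator (by fun_prop) measurableSet_Ici
  set S : ℝ → ENNReal := fun x => ∫⁻ t in Ioo (0:ℝ) 1 ∩ Icc (x - 2 * h) (x + 2 * h), w t with hS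
  have hSe : ∀ x, S x = ENNReal.ofReal
      (∫ t in Ioo (0:ℝ) 1 ∩ Icc (x - 2 * h) (x + 2 * h), |v t| ^ p) := by
    intro x
    rw [hS, ofReal_integral_eq_lintegral_ofReal]
    · exact (hvc.integrableOn_Icc (a := x - 2*h) (b := x + 2*h)).mono_set inter_subset_right
    · exact Filter.Eventually.of_forall (fun t => by positivity)
  set W := ∫ x in Ioo (0:ℝ) 1, |v x| ^ p with hW
  have hW0 : 0 ≤ W := integral_nonneg (fun t => by positivity)
  have hWe : ∫⁻ t in Ioo (0:ℝ) 1, w t = ENNReal.ofReal W := by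
    rw [hW, ofReal_integral_eq_lintegral_ofReal]
    · exact (hvc.integrableOn_Icc (a := 0) (b := 1)).mono_set Ioo_subset_Icc_self
    · exact Filter.Eventually.of_forall (fun t => by positivity)
  set A := C * h ^ (-p - 1) with hA
  have hA0 : 0 ≤ A := by positivity
  set B : ℝ := 2 ^ (p - 1) with hB
  have hB0 : 0 ≤ B := by positivity
  have pw : ∀ x ∈ Ioo (0:ℝ) 1, ∀ y ∈ Ioo (0:ℝ) 1,
      ‖|v x - v y| ^ p / |x - y| ^ (1 + σ)‖ₑ ≤
        ENNReal.ofReal A * (K1 |x - y| * S x) +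
          ENNReal.ofReal B * (K2 |x - y| * w x + K2 |x - y| * w y) := by
    intro x hx y hy
    rw [Real.enorm_eq_ofReal (by positivity)]
    rcases lt_or_ge |x - y| h with hlt | hge
    · refine le_trans ?_ le_self_add
      have n1 := near x hx y hy hlt
      rw [hSe, hK1, indicator_of_mem (mem_Iio.2 hlt), ← ENNReal.ofReal_mul (by positivity),
        ← ENNReal.ofReal_mul hA0]
      apply ENNReal.ofReal_le_ofReal
      set T := ∫ t in Ioo (0:ℝ) 1 ∩ Icc (x - 2 * h) (x + 2 * h), |v t| ^ p with hT
      have hT0 : 0 ≤ T := integral_nonneg (fun t => by positivity)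
      by_cases hxy : x = y
      · subst hxy
        rw [sub_self, abs_zero, Real.zero_rpow hp0.ne', zero_div]
        positivity
      have hr : 0 < |x - y| := abs_pos.2 (sub_ne_zero.2 hxy)
      rw [div_le_iff₀ (by positivity)]
      refine n1.trans (le_of_eq ?_)
      have : |x - y| ^ p = |x - y| ^ (p - σ - 1) * |x - y| ^ (1 + σ) := by
        rw [← Real.rpow_add hr]; congr 1; ring
      rw [this]; ring
    · refine le_trans ?_ le_add_self
      rw [hK2, indicator_of_mem (mem_Ici.2 hge), hwd]
      simp only
      rw [← mul_add, ← ENNReal.ofReal_add (by positivity) (by positivity),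
        ← ENNReal.ofReal_mul (by positivity), ← ENNReal.ofReal_mul hB0]
      apply ENNReal.ofReal_le_ofReal
      have hr : 0 < |x - y| := hpos.trans_le hge
      have h3 : |v x - v y| ^ p ≤ B * (|v x| ^ p + |v y| ^ p) := by
        refine (Real.rpow_le_rpow (abs_nonneg _) (abs_sub _ _) hp0.le).trans ?_
        have := NNReal.rpow_add_le_mul_rpow_add_rpow ⟨|v x|, abs_nonneg _⟩ ⟨|v y|, abs_nonneg _⟩ hp
        exact_mod_cast this
      have e : |x - y| ^ (-1 - σ) = (|x - y| ^ (1 + σ))⁻¹ := by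
        rw [← Real.rpow_neg hr.le]; congr 1; ring
      rw [e, div_eq_mul_inv]
      calc _ ≤ B * (|v x| ^ p + |v y| ^ p) * (|x - y| ^ (1 + σ))⁻¹ := by gcongr
        _ = _ := by ring
  set c1 : ENNReal := 2 * ENNReal.ofReal (h ^ (p - σ) / (p - σ)) with hc1
  set c2 : ENNReal := 2 * ENNReal.ofReal (h ^ (-σ) / σ) with hc2
  have c1t : c1 ≠ ⊤ := ENNReal.mul_ne_top (by simp) ENNReal.ofReal_ne_top
  have c2t : c2 ≠ ⊤ := ENNReal.mul_ne_top (by simp) ENNReal.ofReal_ne_top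
  have I1 : ∫⁻ r : ℝ, K1 |r| ≤ c1 := by
    have := aux_k1 (p - σ - 1) h (by linarith) hpos
    rwa [sub_add_cancel] at this
  have I2 : ∫⁻ r : ℝ, K2 |r| ≤ c2 := aux_k2 σ h hσ hpos
  have J1 := aux_conv K1 S mK1 c1 c1t I1
  have J2 := aux_conv K2 w mK2 c2 c2t I2
  have J3 := aux_conv2 K2 w mK2 hw c2 c2t I2
  have J4 : ∫⁻ x in Ioo (0:ℝ) 1, S x ≤ _ := aux_window w hw h
  rw [hWe] at J2 J3 J4
  have big : ‖∫ x in Ioo (0:ℝ) 1, ∫ y in Ioo (0:ℝ) 1,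
      |v x - v y| ^ p / |x - y| ^ (1 + σ)‖ₑ ≤
      ENNReal.ofReal ((8 * C / (p - σ) + 4 * B / σ) * h ^ (-σ) * W) := by
    calc _ ≤ ∫⁻ x in Ioo (0:ℝ) 1, ∫⁻ y in Ioo (0:ℝ) 1,
          ‖|v x - v y| ^ p / |x - y| ^ (1 + σ)‖ₑ := by
          refine (enorm_integral_le_lintegral_enorm _).trans ?_
          exact lintegral_mono fun x => enorm_integral_le_lintegral_enorm _
      _ ≤ ∫⁻ x in Ioo (0:ℝ) 1, ∫⁻ y in Ioo (0:ℝ) 1,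
          (ENNReal.ofReal A * (K1 |x - y| * S x) +
          ENNReal.ofReal B * (K2 |x - y| * w x + K2 |x - y| * w y)) := by
          apply setLIntegral_mono' measurableSet_Ioo
          intro x hx
          apply setLIntegral_mono' measurableSet_Ioo
          intro y hy
          exact pw x hx y hy
      _ = ENNReal.ofReal A * (∫⁻ x in Ioo (0:ℝ) 1, ∫⁻ y in Ioo (0:ℝ) 1, K1 |x - y| * S x) +
          ENNReal.ofReal B * ((∫⁻ x in Ioo (0:ℝ) 1, ∫⁻ y in Ioo (0:ℝ) 1, K2 |x - y| * w x) +
            (∫⁻ x in Ioo (0:ℝ) 1, ∫⁻ y in Ioo (0:ℝ) 1, K2 |x - y| * w y)) := by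
          have e1 : ∀ x, ∫⁻ y in Ioo (0:ℝ) 1, (ENNReal.ofReal A * (K1 |x - y| * S x) +
              ENNReal.ofReal B * (K2 |x - y| * w x + K2 |x - y| * w y)) =
              ENNReal.ofReal A * (∫⁻ y in Ioo (0:ℝ) 1, K1 |x - y| * S x) +
              ENNReal.ofReal B * ((∫⁻ y in Ioo (0:ℝ) 1, K2 |x - y| * w x) +
              (∫⁻ y in Ioo (0:ℝ) 1, K2 |x - y| * w y)) := by
            intro x
            rw [lintegral_add_left (by fun_prop), lintegral_const_mul' _ _ ENNReal.ofReal_ne_top,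
              lintegral_const_mul' _ _ ENNReal.ofReal_ne_top, lintegral_add_left (by fun_prop)]
          simp_rw [e1]
          have m2 : Measurable fun x => ∫⁻ y in Ioo (0:ℝ) 1, K2 |x - y| * w x := by
            apply Measurable.lintegral_prod_right'
              (f := fun z : ℝ × ℝ => K2 |z.1 - z.2| * w z.1)
            fun_prop
          have m3 : Measurable fun x => ∫⁻ y in Ioo (0:ℝ) 1, K2 |x - y| * w y := by
            apply Measurable.lintegral_prod_right'
              (f := fun z : ℝ × ℝ => K2 |z.1 - z.2| * w z.2)
            fun_prop
          rw [lintegral_add_right _ (by fun_prop), lintegral_const_mul' _ _ ENNReal.ofReal_ne_top,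
              lintegral_const_mul' _ _ ENNReal.ofReal_ne_top, lintegral_add_left m2]
      _ ≤ ENNReal.ofReal A * (c1 * (ENNReal.ofReal (4 * h) * ENNReal.ofReal W)) +
          ENNReal.ofReal B * (c2 * ENNReal.ofReal W + c2 * ENNReal.ofReal W) := by
          gcongr
          exact J1.trans (by gcongr)
      _ = _ := by
          have t2 : (2 : ENNReal) = ENNReal.ofReal 2 := by simp
          have n1 : 0 ≤ h ^ (p - σ) / (p - σ) := by positivity
          rw [hc1, hc2, t2, ← ENNReal.ofReal_mul (by norm_num), ← ENNReal.ofReal_mul (by positivity),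
            ← ENNReal.ofReal_mul (by positivity), ← ENNReal.ofReal_mul hA0,
            ← ENNReal.ofReal_mul (by norm_num), ← ENNReal.ofReal_mul (by positivity),
            ← ENNReal.ofReal_add (by positivity) (by positivity),
            ← ENNReal.ofReal_mul hB0, ← ENNReal.ofReal_add (by positivity) (by positivity)]
          congr 1
          have e : h ^ (-σ) = h ^ (-p - 1) * h ^ (p - σ) * h := by
            conv_rhs => rw [← Real.rpow_add hpos]
            nth_rewrite 3 [← Real.rpow_one h]
            rw [← Real.rpow_add hpos]; congr 1; ring
          have e' : A * (2 * (h ^ (p - σ) / (p - σ)) * (4 * h * W)) =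
              8 * C / (p - σ) * (h ^ (-p - 1) * h ^ (p - σ) * h) * W := by
            rw [hA]; ring
          rw [e', ← e]; ring
  rw [Real.enorm_eq_ofReal (integral_nonneg fun x => integral_nonneg fun y => by positivity),
    ENNReal.ofReal_le_ofReal_iff (by positivity)] at big
  exact big

/-- Fractional inverse inequality in 1D: for `0 < s < 1`, `1 ≤ p < ∞` with `sp < 1`,
there is `C > 0` (independent of the mesh size `h = 1/N` and of `v`) such that every
continuous piecewise polynomial `v` of degree at most `m` on the uniform mesh satisfies
`[v]_{W^{s,p}(0,1)} ≤ C h^{-s} ‖v‖_{L^p(0,1)}`. -/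
theorem stmt_7 (s p : ℝ) (m : ℕ) (hs : 0 < s) (hs1 : s < 1) (hp : 1 ≤ p)
    (hsp : s * p < 1) :
    ∃ C > 0, ∀ (N : ℕ) (h : ℝ) (v : ℝ → ℝ), 0 < N → h = 1 / (N : ℝ) →
      ContinuousOn v (Icc 0 1) →
      (∀ k : ℕ, k < N → ∃ P : Polynomial ℝ, P.natDegree ≤ m ∧
        ∀ x ∈ Icc ((k : ℝ) * h) (((k : ℝ) + 1) * h), v x = P.eval x) →
      (∫ x in Ioo (0:ℝ) 1, ∫ y in Ioo (0:ℝ) 1,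
          |v x - v y| ^ p / |x - y| ^ (1 + s * p)) ^ (1/p)
        ≤ C * h ^ (-s) * (∫ x in Ioo (0:ℝ) 1, |v x| ^ p) ^ (1/p) := by
  obtain ⟨D, hD, H⟩ := aux_main s p m hs hs1 hp
  have hp0 : 0 < p := by linarith
  refine ⟨D ^ (1/p), by positivity, ?_⟩
  intro N h v hN hh hv hpoly
  have hN0 : (0:ℝ) < N := by exact_mod_cast hN
  have hpos : 0 < h := by rw [hh]; positivity
  have hNh : N * h = 1 := by rw [hh]; field_simp
  set u : ℝ → ℝ := IccExtend (zero_le_one' ℝ) ((Icc (0:ℝ) 1).domRestrict v) with hu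
  have huc : Continuous u := (continuousOn_iff_continuous_domRestrict.1 hv).Icc_extend'
  have hue : ∀ x ∈ Icc (0:ℝ) 1, u x = v x := by
    intro x hx
    rw [hu, IccExtend_of_mem _ _ hx]; rfl
  have h1 := H N h u hN hh huc (by
    intro k hk
    obtain ⟨P, hP, hPe⟩ := hpoly k hk
    refine ⟨P, hP, fun x hx => ?_⟩
    rw [← hPe x hx]
    apply hue
    have h3 : (k:ℝ) + 1 ≤ N := by exact_mod_cast hk
    have h4 := mul_le_mul_of_nonneg_right h3 hpos.le
    have h5 : 0 ≤ (k:ℝ) * h := by positivity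
    exact ⟨by linarith [hx.1], by linarith [hx.2]⟩)
  have e1 : ∫ x in Ioo (0:ℝ) 1, |u x| ^ p = ∫ x in Ioo (0:ℝ) 1, |v x| ^ p :=
    setIntegral_congr_fun measurableSet_Ioo
      (fun x hx => by simp only [hue x (Ioo_subset_Icc_self hx)])
  have e2 : (∫ x in Ioo (0:ℝ) 1, ∫ y in Ioo (0:ℝ) 1,
      |u x - u y| ^ p / |x - y| ^ (1 + s * p)) = ∫ x in Ioo (0:ℝ) 1, ∫ y in Ioo (0:ℝ) 1,
      |v x - v y| ^ p / |x - y| ^ (1 + s * p) := by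
    apply setIntegral_congr_fun measurableSet_Ioo
    intro x hx
    apply setIntegral_congr_fun measurableSet_Ioo
    intro y hy
    simp only [hue x (Ioo_subset_Icc_self hx), hue y (Ioo_subset_Icc_self hy)]
  rw [e1, e2] at h1
  have hW0 : 0 ≤ ∫ x in Ioo (0:ℝ) 1, |v x| ^ p := integral_nonneg (fun t => by positivity)
  have h2 := Real.rpow_le_rpow
    (integral_nonneg fun x => integral_nonneg fun y => by positivity) h1
    (by positivity : 0 ≤ 1 / p)
  rw [Real.mul_rpow (by positivity) hW0, Real.mul_rpow hD.le (by positivity),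
    ← Real.rpow_mul hpos.le] at h2
  have e3 : -(s * p) * (1 / p) = -s := by field_simp
  rw [e3] at h2
  exact h2
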